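/- arXiv:2302.05437 — 4 statements merged into one kernel-verified Lean document; each statement's English description precedes it below -/
import Mathlib

section
/- Let (X_t)_{t≥1} be a martingale difference sequence (with respect to its natural filtration) such that there exists a constant c > 0 with |X_t| ≤ c almost surely for all t ≥ 1, and define σ_t² = E[X_t² | X_{t-1}, …, X_1]. Then for all b > 0, F > 0 and T ≥ 1, the probability of the event { |∑_{t=1}^T X_t| > b and ∑_{t=1}^T σ_t² ≤ F } is at most 2·exp( − b² / (2F + 2cb/3) ). -/
open MeasureTheory Finset

/-- Bernstein's bound on the exponential remainder. -/
lemma Real.exp_le_one_add_add_sq_div {x a : ℝ} (hx : |x| ≤ a) (ha : a < 3) :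
    Real.exp x ≤ 1 + x + x ^ 2 / (2 * (1 - a / 3)) := by
  have ha0 : 0 ≤ a := (abs_nonneg x).trans hx
  have hexp : HasSum (fun n : ℕ => x ^ n / (n.factorial : ℝ)) (Real.exp x) := by
    rw [Real.exp_eq_exp_ℝ]
    exact NormedSpace.expSeries_div_hasSum_exp x
  have htail := (hasSum_nat_add_iff' 2).mpr hexp
  have hgeom : HasSum (fun n : ℕ => x ^ 2 / 2 * (a / 3) ^ n) (x ^ 2 / 2 * (1 - a / 3)⁻¹) :=
    (hasSum_geometric_of_lt_one (by positivity) (by linarith)).mul_left _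
  have hle : ∀ n : ℕ, x ^ (n + 2) / ((n + 2).factorial : ℝ) ≤ x ^ 2 / 2 * (a / 3) ^ n := by
    intro n
    have hfact : (2 * 3 ^ n : ℝ) ≤ ((n + 2).factorial : ℝ) := by
      have h := @Nat.factorial_mul_pow_le_factorial 2 n
      rw [add_comm n 2]
      exact_mod_cast h
    have hpow : x ^ n ≤ a ^ n :=
      (le_abs_self _).trans (by rw [abs_pow]; exact pow_le_pow_left₀ (abs_nonneg x) hx n)
    calc x ^ (n + 2) / ((n + 2).factorial : ℝ)
        = x ^ 2 * x ^ n / ((n + 2).factorial : ℝ) := by rw [pow_add, mul_comm]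
      _ ≤ x ^ 2 * a ^ n / ((n + 2).factorial : ℝ) := by gcongr
      _ ≤ x ^ 2 * a ^ n / (2 * 3 ^ n) := by gcongr
      _ = x ^ 2 / 2 * (a / 3) ^ n := by rw [div_pow, mul_div_mul_comm]
  have h := hasSum_le hle htail hgeom
  simp only [sum_range_succ, range_zero, sum_empty, pow_zero, pow_one, Nat.factorial] at h
  rw [← div_eq_mul_inv, div_div] at h
  norm_num at h ⊢
  linarith

section CondExp

variable {Ω : Type*} {m m0 : MeasurableSpace Ω} {μ : Measure Ω}

/-- Bounded `m`-measurable factors may be moved inside a conditional expectation under `∫`. -/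
lemma integral_mul_condExp_of_bounded [IsFiniteMeasure μ] (hm : m ≤ m0) {A Y : Ω → ℝ}
    (hA : StronglyMeasurable[m] A) {K : ℝ} (hAK : ∀ᵐ ω ∂μ, ‖A ω‖ ≤ K) (hY : Integrable Y μ) :
    ∫ ω, A ω * (μ[Y | m]) ω ∂μ = ∫ ω, A ω * Y ω ∂μ := by
  have h := condExp_stronglyMeasurable_mul_of_bound hm hA hY K hAK
  rw [← integral_condExp hm (f := fun ω => A ω * Y ω)]
  exact integral_congr_ae h.symm

/-- One step of the exponential supermartingale underlying Freedman's inequality. -/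
lemma integral_mul_exp_sub_condVar_le [IsFiniteMeasure μ] (hm : m ≤ m0) {W Y : Ω → ℝ}
    (hW : StronglyMeasurable[m] W) (hW0 : ∀ ω, 0 ≤ W ω) {K : ℝ} (hWK : ∀ᵐ ω ∂μ, W ω ≤ K)
    (hY : Measurable Y) {c l : ℝ} (hl : 0 ≤ l) (hlc : l * c < 3)
    (hYc : ∀ᵐ ω ∂μ, |Y ω| ≤ c) (hmean : μ[Y | m] =ᵐ[μ] 0) :
    ∫ ω, W ω * Real.exp (l * Y ω -
        l ^ 2 / (2 * (1 - l * c / 3)) * (μ[fun ω => Y ω ^ 2 | m]) ω) ∂μ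
      ≤ ∫ ω, W ω ∂μ := by
  set g := l ^ 2 / (2 * (1 - l * c / 3)) with hg
  have hg0 : 0 ≤ g := div_nonneg (sq_nonneg l) (by linarith)
  set V := μ[fun ω => Y ω ^ 2 | m]
  have hV0 : ∀ᵐ ω ∂μ, 0 ≤ V ω := condExp_nonneg (ae_of_all _ fun ω => sq_nonneg (Y ω))
  have hYint : Integrable Y μ := Integrable.of_bound hY.aestronglyMeasurable c hYc
  have hY2int : Integrable (fun ω => Y ω ^ 2) μ := by
    refine Integrable.of_bound (hY.pow_const 2).aestronglyMeasurable (c ^ 2) ?_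
    filter_upwards [hYc] with ω h
    rw [norm_pow]
    exact pow_le_pow_left₀ (norm_nonneg _) h 2
  have hVint : Integrable V μ := integrable_condExp
  have hWint : Integrable W μ := by
    refine Integrable.of_bound (hW.mono hm).aestronglyMeasurable K ?_
    filter_upwards [hWK] with ω h
    rwa [Real.norm_of_nonneg (hW0 ω)]
  set A : Ω → ℝ := fun ω => W ω * Real.exp (-(g * V ω)) with hAdef
  have hA : StronglyMeasurable[m] A :=
    hW.mul (Real.continuous_exp.comp_stronglyMeasurable
      ((stronglyMeasurable_condExp.const_mul g).neg))
  have hA0 : ∀ ω, 0 ≤ A ω := fun ω => mul_nonneg (hW0 ω) (Real.exp_pos _).le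
  have hAK : ∀ᵐ ω ∂μ, ‖A ω‖ ≤ K := by
    filter_upwards [hWK, hV0] with ω h hv
    rw [Real.norm_of_nonneg (hA0 ω)]
    refine (mul_le_of_le_one_right (hW0 ω) ?_).trans h
    exact Real.exp_le_one_iff.mpr (neg_nonpos.mpr (mul_nonneg hg0 hv))
  have hAm := (hA.mono hm).aestronglyMeasurable (μ := μ)
  have hAint : Integrable A μ := Integrable.of_bound hAm K hAK
  have hAY : Integrable (fun ω => A ω * Y ω) μ := hYint.bdd_mul hAm hAK
  have hAY2 : Integrable (fun ω => A ω * Y ω ^ 2) μ := hY2int.bdd_mul hAm hAK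
  have hAV : Integrable (fun ω => A ω * V ω) μ := hVint.bdd_mul hAm hAK
  have hAYzero : ∫ ω, A ω * Y ω ∂μ = 0 := by
    rw [← integral_mul_condExp_of_bounded hm hA hAK hYint]
    refine integral_eq_zero_of_ae ?_
    filter_upwards [hmean] with ω h
    simp [h]
  calc ∫ ω, W ω * Real.exp (l * Y ω - g * V ω) ∂μ
      ≤ ∫ ω, (A ω + l * (A ω * Y ω) + g * (A ω * Y ω ^ 2)) ∂μ := by
        refine integral_mono_of_nonneg
          (ae_of_all _ fun ω => mul_nonneg (hW0 ω) (Real.exp_pos _).le)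
          ((hAint.add (hAY.const_mul l)).add (hAY2.const_mul g)) ?_
        filter_upwards [hYc] with ω h
        have hbound : |l * Y ω| ≤ l * c := by
          rw [abs_mul, abs_of_nonneg hl]
          exact mul_le_mul_of_nonneg_left h hl
        have hexp := mul_le_mul_of_nonneg_left
          (Real.exp_le_one_add_add_sq_div hbound hlc) (hA0 ω)
        have hsplit : W ω * Real.exp (l * Y ω - g * V ω) = A ω * Real.exp (l * Y ω) := by
          rw [hAdef, sub_eq_add_neg, Real.exp_add]
          ring
        rw [hsplit]
        refine hexp.trans_eq ?_
        rw [hg]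
        ring
    _ = ∫ ω, A ω ∂μ + l * ∫ ω, A ω * Y ω ∂μ + g * ∫ ω, A ω * Y ω ^ 2 ∂μ := by
        rw [integral_add (f := fun ω => A ω + l * (A ω * Y ω)) (hAint.add (hAY.const_mul l))
            (hAY2.const_mul g),
          integral_add hAint (hAY.const_mul l), integral_const_mul, integral_const_mul]
    _ = ∫ ω, (A ω + g * (A ω * V ω)) ∂μ := by
        rw [hAYzero, ← integral_mul_condExp_of_bounded hm hA hAK hY2int,
          integral_add hAint (hAV.const_mul g), integral_const_mul, mul_zero, add_zero]
    _ ≤ ∫ ω, W ω ∂μ := by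
        refine integral_mono (hAint.add (hAV.const_mul g)) hWint fun ω => ?_
        have h : Real.exp (-(g * V ω)) * (g * V ω + 1) ≤ 1 := by
          rw [Real.exp_neg, inv_mul_le_one₀ (Real.exp_pos _)]
          exact Real.add_one_le_exp _
        calc A ω + g * (A ω * V ω) = W ω * (Real.exp (-(g * V ω)) * (g * V ω + 1)) := by
              rw [hAdef]; ring
          _ ≤ W ω := mul_le_of_le_one_right (hW0 ω) h

end CondExp

section Freedman

variable {Ω : Type*} {m0 : MeasurableSpace Ω} {μ : Measure Ω} [IsProbabilityMeasure μ]
  {ℱ : Filtration ℕ m0} {Y : ℕ → Ω → ℝ} {c : ℝ}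

/-- The exponential supermartingale of a bounded martingale difference sequence has mean at most
one. -/
lemma integral_exp_sum_sub_condVar_le_one
    (hadp : ∀ n, Measurable[ℱ (n + 1)] (Y n)) (hYc : ∀ n, ∀ᵐ ω ∂μ, |Y n ω| ≤ c)
    (hmean : ∀ n, μ[Y n | ℱ n] =ᵐ[μ] 0) {l : ℝ} (hl : 0 ≤ l) (hlc : l * c < 3) (n : ℕ) :
    Integrable (fun ω => Real.exp (∑ k ∈ range n, (l * Y k ω -
        l ^ 2 / (2 * (1 - l * c / 3)) * (μ[fun ω => Y k ω ^ 2 | ℱ k]) ω))) μ ∧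
    ∫ ω, Real.exp (∑ k ∈ range n, (l * Y k ω -
        l ^ 2 / (2 * (1 - l * c / 3)) * (μ[fun ω => Y k ω ^ 2 | ℱ k]) ω)) ∂μ ≤ 1 := by
  set g := l ^ 2 / (2 * (1 - l * c / 3)) with hg
  have hg0 : 0 ≤ g := div_nonneg (sq_nonneg l) (by linarith)
  have hmeas : ∀ n, StronglyMeasurable[ℱ n] (fun ω => Real.exp (∑ k ∈ range n,
      (l * Y k ω - g * (μ[fun ω => Y k ω ^ 2 | ℱ k]) ω))) := by
    intro n
    refine Real.continuous_exp.comp_stronglyMeasurable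
      (Finset.stronglyMeasurable_fun_sum _ fun k hk => ?_)
    have hkn : k < n := mem_range.mp hk
    exact (((hadp k).mono (ℱ.mono hkn) le_rfl).stronglyMeasurable.const_mul l).sub
      ((stronglyMeasurable_condExp.mono (ℱ.mono hkn.le)).const_mul g)
  have hbound : ∀ n : ℕ, ∀ᵐ ω ∂μ, Real.exp (∑ k ∈ range n,
      (l * Y k ω - g * (μ[fun ω => Y k ω ^ 2 | ℱ k]) ω)) ≤ Real.exp (n * (l * c)) := by
    intro n
    have hV0 : ∀ᵐ ω ∂μ, ∀ k, 0 ≤ (μ[fun ω => Y k ω ^ 2 | ℱ k]) ω :=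
      ae_all_iff.mpr fun k => condExp_nonneg (ae_of_all _ fun ω => sq_nonneg (Y k ω))
    filter_upwards [hV0, ae_all_iff.mpr hYc] with ω hv hy
    refine Real.exp_le_exp.mpr ((sum_le_card_nsmul _ _ (l * c) fun k _ => ?_).trans_eq ?_)
    · have h1 := mul_le_mul_of_nonneg_left ((le_abs_self _).trans (hy k)) hl
      have h2 := mul_nonneg hg0 (hv k)
      linarith
    · rw [card_range, nsmul_eq_mul]
  refine ⟨Integrable.of_bound ((hmeas n).mono (ℱ.le n)).aestronglyMeasurable
    (Real.exp (n * (l * c))) ?_, ?_⟩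
  · filter_upwards [hbound n] with ω h
    rwa [Real.norm_of_nonneg (Real.exp_pos _).le]
  · induction n with
    | zero => simp
    | succ n ih =>
      simp only [sum_range_succ, Real.exp_add]
      exact (integral_mul_exp_sub_condVar_le (ℱ.le n) (hmeas n) (fun ω => (Real.exp_pos _).le)
        (hbound n) ((hadp n).mono (ℱ.le _) le_rfl) hl hlc (hYc n) (hmean n)).trans ih

/-- One-sided Freedman inequality. -/
lemma measure_lt_sum_and_sum_condVar_le (hc : 0 < c)
    (hadp : ∀ n, Measurable[ℱ (n + 1)] (Y n)) (hYc : ∀ n, ∀ᵐ ω ∂μ, |Y n ω| ≤ c)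
    (hmean : ∀ n, μ[Y n | ℱ n] =ᵐ[μ] 0) {b F : ℝ} (hb : 0 < b) (hF : 0 < F) (n : ℕ) :
    μ {ω | b < ∑ k ∈ range n, Y k ω ∧ ∑ k ∈ range n, (μ[fun ω => Y k ω ^ 2 | ℱ k]) ω ≤ F}
      ≤ ENNReal.ofReal (Real.exp (-(b ^ 2) / (2 * F + 2 * c * b / 3))) := by
  set D := F + c * b / 3 with hD
  have hDpos : 0 < D := by positivity
  set l := b / D with hl
  have hl0 : 0 < l := by positivity
  have hone : 1 - l * c / 3 = F / D := by
    rw [hl, eq_div_iff hDpos.ne', sub_mul]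
    field_simp
    rw [hD]
    ring
  have hlc : l * c < 3 := by
    have : 0 < F / D := by positivity
    linarith
  obtain ⟨hint, hle⟩ := integral_exp_sum_sub_condVar_le_one hadp hYc hmean hl0.le hlc n
  set g := l ^ 2 / (2 * (1 - l * c / 3)) with hg
  have hg0 : 0 ≤ g := div_nonneg (sq_nonneg l) (by linarith)
  have hexponent : l * b - g * F = b ^ 2 / (2 * F + 2 * c * b / 3) := by
    have h2D : 2 * F + 2 * c * b / 3 = 2 * D := by rw [hD]; ring
    rw [h2D, hg, hone, hl]
    field_simp
    ring
  set Z : Ω → ℝ := fun ω => Real.exp (∑ k ∈ range n, (l * Y k ω -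
    g * (μ[fun ω => Y k ω ^ 2 | ℱ k]) ω)) with hZ
  have hsub : {ω | b < ∑ k ∈ range n, Y k ω ∧
      ∑ k ∈ range n, (μ[fun ω => Y k ω ^ 2 | ℱ k]) ω ≤ F} ⊆
      {ω | Real.exp (l * b - g * F) ≤ Z ω} := by
    rintro ω ⟨h1, h2⟩
    simp only [Set.mem_ofPred_eq, hZ, Real.exp_le_exp, sum_sub_distrib, ← mul_sum]
    exact sub_le_sub (mul_le_mul_of_nonneg_left h1.le hl0.le) (mul_le_mul_of_nonneg_left h2 hg0)
  refine (measure_mono hsub).trans ?_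
  rw [← ofReal_measureReal]
  refine ENNReal.ofReal_le_ofReal ?_
  have hmarkov := mul_meas_ge_le_integral_of_nonneg
    (ae_of_all μ fun ω => (Real.exp_pos _).le) hint (Real.exp (l * b - g * F))
  rw [neg_div, ← hexponent, Real.exp_neg, ← one_div, le_div_iff₀ (Real.exp_pos _), mul_comm]
  exact hmarkov.trans hle

end Freedman


/-- Freedman's inequality for bounded real-valued martingale difference sequences
with respect to their natural filtration. -/
theorem freedman_inequality
    {Ω : Type*} {m0 : MeasurableSpace Ω} (μ : Measure Ω) [IsProbabilityMeasure μ]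
    (X : ℕ → Ω → ℝ) (hXmeas : ∀ t, Measurable (X t))
    (c : ℝ) (hc : 0 < c)
    (hbdd : ∀ t, 1 ≤ t → ∀ᵐ ω ∂μ, |X t ω| ≤ c)
    (G : ℕ → MeasurableSpace Ω)
    (hG : ∀ t, G t = ⨆ s ∈ Set.Icc 1 t, MeasurableSpace.comap (X s) inferInstance)
    (hmds : ∀ t, 1 ≤ t → μ[X t | G (t - 1)] =ᵐ[μ] 0)
    (σsq : ℕ → Ω → ℝ)
    (hσsq : ∀ t, 1 ≤ t → σsq t =ᵐ[μ] μ[fun ω => (X t ω) ^ 2 | G (t - 1)])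
    (b F : ℝ) (hb : 0 < b) (hF : 0 < F) (T : ℕ) (hT : 1 ≤ T) :
    μ {ω | b < |∑ t ∈ Icc 1 T, X t ω| ∧ ∑ t ∈ Icc 1 T, σsq t ω ≤ F}
      ≤ ENNReal.ofReal (2 * Real.exp (-(b ^ 2) / (2 * F + 2 * c * b / 3))) := by
  have hcomap : ∀ s, MeasurableSpace.comap (X s) inferInstance ≤ m0 :=
    fun s => (hXmeas s).comap_le
  let ℱ : Filtration ℕ m0 :=
    { seq := G
      mono' := fun s t hst => by
        rw [hG s, hG t]
        exact biSup_mono fun k hk => ⟨hk.1, hk.2.trans hst⟩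
      le' := fun t => by
        rw [hG t]
        exact iSup₂_le fun s _ => hcomap s }
  have hadp : ∀ n, Measurable[ℱ (n + 1)] (X (n + 1)) := by
    intro n
    refine measurable_iff_comap_le.mpr ?_
    change _ ≤ G (n + 1)
    rw [hG (n + 1)]
    exact le_biSup (fun s => MeasurableSpace.comap (X s) inferInstance)
      (show n + 1 ∈ Set.Icc 1 (n + 1) from ⟨by omega, le_rfl⟩)
  have hshift : ∀ f : ℕ → ℝ, ∑ t ∈ Icc 1 T, f t = ∑ k ∈ range T, f (k + 1) := by
    intro f
    rw [range_eq_Ico, sum_Ico_add' f 0 T 1]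
    rfl
  have hc' : ∀ n, ∀ᵐ ω ∂μ, |X (n + 1) ω| ≤ c := fun n => hbdd (n + 1) (by omega)
  have hmean : ∀ n, μ[X (n + 1) | ℱ n] =ᵐ[μ] 0 := fun n => hmds (n + 1) (by omega)
  have hmean_neg : ∀ n, μ[-X (n + 1) | ℱ n] =ᵐ[μ] 0 := by
    intro n
    filter_upwards [condExp_neg (μ := μ) (X (n + 1)) (ℱ n), hmean n] with ω h1 h2
    simp [h1, h2]
  have hσ : ∀ᵐ ω ∂μ, ∀ n, σsq (n + 1) ω = (μ[fun ω => X (n + 1) ω ^ 2 | ℱ n]) ω :=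
    ae_all_iff.mpr fun n => hσsq (n + 1) (by omega)
  have hupper := measure_lt_sum_and_sum_condVar_le hc hadp hc' hmean hb hF T
  have hlower := measure_lt_sum_and_sum_condVar_le (Y := fun n => -X (n + 1)) hc
    (fun n => (hadp n).neg) (fun n => by simpa using hc' n) hmean_neg hb hF T
  rw [two_mul, ENNReal.ofReal_add (Real.exp_pos _).le (Real.exp_pos _).le]
  refine (measure_mono_ae ?_).trans ((measure_union_le _ _).trans (add_le_add hupper hlower))
  filter_upwards [hσ] with ω hω
  rintro ⟨h1, h2⟩
  rw [hshift] at h1 h2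
  simp only [hω] at h2
  rcases lt_abs.mp h1 with h | h
  · exact Or.inl ⟨h, h2⟩
  · refine Or.inr ⟨?_, ?_⟩
    · simpa using h
    · simpa using h2
end

section
/- Let f : ℝ^d → ℝ be convex, differentiable and L-smooth with a minimizer x* and f* = f(x*). Fix a step size η_t with 0 < η_t ≤ 1/(4L), a point x_t ∈ ℝ^d, a vector g̃_t ∈ ℝ^d, and set x_{t+1} = x_t − η_t·g̃_t, θ_t = g̃_t − ∇f(x_t), and Δ_t = f(x_t) − f*. Then η_t·Δ_t ≤ ‖x_t − x*‖² − ‖x_{t+1} − x*‖² + 2·η_t²·‖θ_t‖² − 2·η_t·⟨θ_t, x_t − x*⟩. -/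
open scoped RealInnerProductSpace

section SmoothConvex

variable {E : Type*} [NormedAddCommGroup E] [InnerProductSpace ℝ E] [CompleteSpace E] {f : E → ℝ}

theorem Differentiable.hasDerivAt_comp_add_smul (hf : Differentiable ℝ f) (x v : E) (s : ℝ) :
    HasDerivAt (fun s : ℝ => f (x + s • v)) ⟪gradient f (x + s • v), v⟫ s := by
  have hline : HasDerivAt (fun s : ℝ => x + s • v) v s := by
    simpa using ((hasDerivAt_id s).smul_const v).const_add x
  rw [inner_gradient_left]
  exact (hf _).hasFDerivAt.comp_hasDerivAt s hline

/-- First-order characterization of convexity. -/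
theorem ConvexOn.add_inner_gradient_le (hconv : ConvexOn ℝ Set.univ f) (hf : Differentiable ℝ f)
    (x y : E) : f x + ⟪gradient f x, y - x⟫ ≤ f y := by
  have hline : ConvexOn ℝ Set.univ (fun s : ℝ => f (x + s • (y - x))) := by
    simpa [Function.comp_def, AffineMap.lineMap_apply, add_comm] using
      hconv.comp_affineMap (AffineMap.lineMap (k := ℝ) x y)
  have hslope := hline.le_slope_of_hasDerivAt (Set.mem_univ 0) (Set.mem_univ 1) one_pos
    (hf.hasDerivAt_comp_add_smul x (y - x) 0)
  simp only [slope_def_field, zero_smul, add_zero, one_smul, add_sub_cancel, sub_zero,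
    div_one] at hslope
  linarith

/-- Quadratic upper bound for a function with Lipschitz gradient. -/
theorem Differentiable.le_add_inner_gradient_add_sq (hf : Differentiable ℝ f) {L : ℝ}
    (hL : ∀ x y, ‖gradient f x - gradient f y‖ ≤ L * ‖x - y‖) (x v : E) :
    f (x + v) ≤ f x + ⟪gradient f x, v⟫ + L / 2 * ‖v‖ ^ 2 := by
  have hderiv (s : ℝ) : HasDerivAt
      (fun s : ℝ => f (x + s • v) - s * ⟪gradient f x, v⟫ - s ^ 2 * (L / 2 * ‖v‖ ^ 2))
      (⟪gradient f (x + s • v), v⟫ - ⟪gradient f x, v⟫ - s * (L * ‖v‖ ^ 2)) s := by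
    refine (((hf.hasDerivAt_comp_add_smul x v s).sub
      ((hasDerivAt_id s).mul_const ⟪gradient f x, v⟫)).sub
      ((hasDerivAt_pow 2 s).mul_const (L / 2 * ‖v‖ ^ 2))).congr_deriv ?_
    push_cast
    ring
  have hanti : AntitoneOn
      (fun s : ℝ => f (x + s • v) - s * ⟪gradient f x, v⟫ - s ^ 2 * (L / 2 * ‖v‖ ^ 2))
      (Set.Ici 0) := by
    refine antitoneOn_of_hasDerivWithinAt_nonpos (convex_Ici 0)
      (fun s _ => (hderiv s).continuousAt.continuousWithinAt)
      (fun s _ => (hderiv s).hasDerivWithinAt) fun s hs => ?_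
    have hs0 : 0 ≤ s := interior_subset hs
    have hgrad : ‖gradient f (x + s • v) - gradient f x‖ ≤ L * (s * ‖v‖) := by
      simpa [norm_smul, abs_of_nonneg hs0] using hL (x + s • v) x
    have hinner := (real_inner_le_norm (gradient f (x + s • v) - gradient f x) v).trans
      (mul_le_mul_of_nonneg_right hgrad (norm_nonneg v))
    rw [inner_sub_left] at hinner
    linarith
  have h := hanti Set.self_mem_Ici (Set.mem_Ici.2 zero_le_one) zero_le_one
  simp only [one_smul, zero_smul, add_zero] at h
  linarith

theorem Differentiable.norm_gradient_sq_le (hf : Differentiable ℝ f) {L : ℝ} (hL0 : 0 < L)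
    (hL : ∀ x y, ‖gradient f x - gradient f y‖ ≤ L * ‖x - y‖) {m : ℝ} (hm : ∀ y, m ≤ f y) (x : E) :
    ‖gradient f x‖ ^ 2 ≤ 2 * L * (f x - m) := by
  have h := (hm _).trans (hf.le_add_inner_gradient_add_sq hL x (-(L⁻¹ • gradient f x)))
  rw [inner_neg_right, real_inner_smul_right, real_inner_self_eq_norm_sq, norm_neg, norm_smul,
    Real.norm_of_nonneg (inv_nonneg.2 hL0.le)] at h
  field_simp at h
  linarith

end SmoothConvex

/-- Per-iteration inequality for (clipped) SGD on convex smooth objectives. -/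
theorem convex_per_iteration_bound
    {d : ℕ} (f : EuclideanSpace ℝ (Fin d) → ℝ)
    (L : ℝ) (hL : 0 < L)
    (hconv : ConvexOn ℝ Set.univ f)
    (hdiff : Differentiable ℝ f)
    (hsmooth : ∀ x y, ‖gradient f x - gradient f y‖ ≤ L * ‖x - y‖)
    (xstar : EuclideanSpace ℝ (Fin d)) (hmin : ∀ y, f xstar ≤ f y)
    (ηt : ℝ) (hη0 : 0 < ηt) (hη : ηt ≤ 1 / (4 * L))
    (xt gt xt1 : EuclideanSpace ℝ (Fin d)) (hupdate : xt1 = xt - ηt • gt)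
    (θt : EuclideanSpace ℝ (Fin d)) (hθ : θt = gt - gradient f xt) :
    ηt * (f xt - f xstar) ≤
      ‖xt - xstar‖ ^ 2 - ‖xt1 - xstar‖ ^ 2 + 2 * ηt ^ 2 * ‖θt‖ ^ 2
        - 2 * ηt * ⟪θt, xt - xstar⟫ := by
  have hfirst := hconv.add_inner_gradient_le hdiff xt xstar
  have hgrad := hdiff.norm_gradient_sq_le hL hsmooth hmin xt
  rw [← neg_sub xt xstar, inner_neg_right] at hfirst
  have hgt : gt = θt + gradient f xt := by simp [hθ]
  have hstep : ‖xt1 - xstar‖ ^ 2 = ‖xt - xstar‖ ^ 2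
      - 2 * ηt * (⟪θt, xt - xstar⟫ + ⟪gradient f xt, xt - xstar⟫) + ηt ^ 2 * ‖gt‖ ^ 2 := by
    rw [hupdate, sub_right_comm, norm_sub_sq_real, real_inner_smul_right, real_inner_comm, hgt,
      inner_add_left, norm_smul, mul_pow, Real.norm_eq_abs, sq_abs]
    ring
  have hnorm : ‖gt‖ ^ 2 ≤ 2 * ‖θt‖ ^ 2 + 2 * ‖gradient f xt‖ ^ 2 := by
    have := parallelogram_law_with_norm ℝ θt (gradient f xt)
    rw [← hgt] at this
    nlinarith [mul_self_nonneg ‖θt - gradient f xt‖]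
  have hηL : 4 * L * ηt ≤ 1 := by
    rw [le_div_iff₀ (by positivity)] at hη
    linarith
  have hgap : 0 ≤ ηt * (f xt - f xstar) := mul_nonneg hη0.le (sub_nonneg.2 (hmin xt))
  have hsq := mul_le_mul_of_nonneg_left hnorm (sq_nonneg ηt)
  have hgrad_sq := mul_le_mul_of_nonneg_left hgrad (sq_nonneg ηt)
  have hfirst_mul := mul_le_mul_of_nonneg_left hfirst hη0.le
  have hηL_mul := mul_le_mul_of_nonneg_right hηL hgap
  rw [hstep]
  linarith
end

section
/- Let f : ℝ^d → ℝ be differentiable and L-smooth with f* such that f(x) ≥ f* for all x. Let η > 0 with η ≤ 1/L, let (g̃_t)_{t≥1} be vectors in ℝ^d, and define iterates x_{t+1} = x_t − η·g̃_t from x₁ ∈ ℝ^d. Let θ_t = g̃_t − ∇f(x_t) = θ_t^u + θ_t^b and Δ_t = f(x_t) − f*. Then for every k ≥ 1: ∑_{t=1}^{k} (η/2)·‖∇f(x_t)‖² ≤ Δ₁ − Δ_{k+1} + ∑_{t=1}^{k} L·η²·‖θ_t^u‖² + ∑_{t=1}^{k} (L·η² − η)·⟨∇f(x_t), θ_t^u⟩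 + ∑_{t=1}^{k} (3η/2)·‖θ_t^b‖². -/
open scoped RealInnerProductSpace
open Finset

/-- Descent lemma: a function with `L`-Lipschitz gradient lies below its quadratic model. -/
theorem descent_of_gradient_lipschitz {E : Type*} [NormedAddCommGroup E] [InnerProductSpace ℝ E]
    [CompleteSpace E] {f : E → ℝ} {L : ℝ} (hdiff : Differentiable ℝ f)
    (hsmooth : ∀ x y, ‖gradient f x - gradient f y‖ ≤ L * ‖x - y‖) (x v : E) :
    f (x + v) ≤ f x + ⟪gradient f x, v⟫ + L / 2 * ‖v‖ ^ 2 := by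
  let φ : ℝ → ℝ := fun s => f (x + s • v) - s * ⟪gradient f x, v⟫ - L / 2 * ‖v‖ ^ 2 * s ^ 2
  have hφ (s : ℝ) : HasDerivAt φ
      (⟪gradient f (x + s • v), v⟫ - ⟪gradient f x, v⟫ - L * ‖v‖ ^ 2 * s) s := by
    have hline : HasDerivAt (fun s : ℝ => x + s • v) v s := by
      simpa using ((hasDerivAt_id s).smul_const v).const_add x
    have hf : HasDerivAt (fun s : ℝ => f (x + s • v)) ⟪gradient f (x + s • v), v⟫ s := by
      have h := (hdiff (x + s • v)).hasGradientAt.hasFDerivAt.comp_hasDerivAt s hline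
      rwa [InnerProductSpace.toDual_apply_apply] at h
    have hlin : HasDerivAt (fun s : ℝ => s * ⟪gradient f x, v⟫) ⟪gradient f x, v⟫ s := by
      simpa using (hasDerivAt_id s).mul_const ⟪gradient f x, v⟫
    have hquad : HasDerivAt (fun s : ℝ => L / 2 * ‖v‖ ^ 2 * s ^ 2) (L * ‖v‖ ^ 2 * s) s := by
      refine ((hasDerivAt_pow 2 s).const_mul (L / 2 * ‖v‖ ^ 2)).congr_deriv ?_
      push_cast
      ring
    exact (hf.sub hlin).sub hquad
  have hanti : AntitoneOn φ (Set.Icc 0 1) := by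
    refine antitoneOn_of_deriv_nonpos (convex_Icc 0 1)
      (fun s _ => (hφ s).continuousAt.continuousWithinAt)
      (fun s _ => (hφ s).differentiableAt.differentiableWithinAt) fun s hs => ?_
    rw [interior_Icc] at hs
    rw [(hφ s).deriv, ← inner_sub_left]
    have hcs := real_inner_le_norm (gradient f (x + s • v) - gradient f x) v
    have hlip := hsmooth (x + s • v) x
    rw [add_sub_cancel_left, norm_smul, Real.norm_of_nonneg hs.1.le] at hlip
    nlinarith [mul_le_mul_of_nonneg_right hlip (norm_nonneg v)]
  have h := hanti (Set.left_mem_Icc.2 zero_le_one) (Set.right_mem_Icc.2 zero_le_one) zero_le_one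
  simp only [φ, one_smul, zero_smul, add_zero] at h
  linarith

/-- One step of inexact gradient descent with gradient error `u + b`. -/
theorem inexact_gradient_step {E : Type*} [NormedAddCommGroup E] [InnerProductSpace ℝ E]
    [CompleteSpace E] {f : E → ℝ} {L η : ℝ} (hdiff : Differentiable ℝ f)
    (hsmooth : ∀ x y, ‖gradient f x - gradient f y‖ ≤ L * ‖x - y‖)
    (hL : 0 ≤ L) (hη0 : 0 ≤ η) (hη : L * η ≤ 1) (x u b : E) :
    η / 2 * ‖gradient f x‖ ^ 2 ≤
      f x - f (x - η • (gradient f x + (u + b))) + L * η ^ 2 * ‖u‖ ^ 2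
        + (L * η ^ 2 - η) * ⟪gradient f x, u⟫ + 3 * η / 2 * ‖b‖ ^ 2 := by
  have hdesc := descent_of_gradient_lipschitz hdiff hsmooth x (-(η • (gradient f x + (u + b))))
  rw [← sub_eq_add_neg] at hdesc
  generalize gradient f x = g at hdesc ⊢
  have hnorm : ‖g + (u + b)‖ ^ 2
      = ‖g‖ ^ 2 + 2 * (⟪g, u⟫ + ⟪g, b⟫) + ‖u + b‖ ^ 2 := by
    rw [norm_add_sq_real, inner_add_right]
  rw [inner_neg_right, real_inner_smul_right, inner_add_right, inner_add_right,
    real_inner_self_eq_norm_sq, norm_neg, norm_smul, mul_pow, Real.norm_eq_abs, sq_abs,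
    hnorm] at hdesc
  have hub : ‖u + b‖ ^ 2 ≤ 2 * ‖u‖ ^ 2 + 2 * ‖b‖ ^ 2 := by
    linarith [parallelogram_law_with_norm ℝ u b, sq_nonneg ‖u - b‖]
  have hgb : 0 ≤ ‖g‖ ^ 2 + 2 * ⟪g, b⟫ + ‖b‖ ^ 2 := by
    rw [← norm_add_sq_real]
    positivity
  have ha0 : 0 ≤ L * η ^ 2 := by positivity
  have ha : 0 ≤ η - L * η ^ 2 := by nlinarith
  linarith [mul_le_mul_of_nonneg_left hub ha0, mul_nonneg ha hgb,
    mul_nonneg ha (sq_nonneg ‖b‖), mul_nonneg hη0 (sq_nonneg ‖b‖)]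

/-- Summed inequality for (clipped) SGD on non-convex smooth objectives. -/
theorem nonconvex_summed_bound
    {d : ℕ} (f : EuclideanSpace ℝ (Fin d) → ℝ)
    (L : ℝ) (hL : 0 < L)
    (hdiff : Differentiable ℝ f)
    (hsmooth : ∀ x y, ‖gradient f x - gradient f y‖ ≤ L * ‖x - y‖)
    (fstar : ℝ) (hfstar : ∀ x, fstar ≤ f x)
    (η : ℝ) (hη0 : 0 < η) (hη : η ≤ 1 / L)
    (x gt : ℕ → EuclideanSpace ℝ (Fin d))
    (hupdate : ∀ t, 1 ≤ t → x (t + 1) = x t - η • gt t)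
    (θ θu θb : ℕ → EuclideanSpace ℝ (Fin d))
    (hθ : ∀ t, θ t = gt t - gradient f (x t))
    (hdecomp : ∀ t, θ t = θu t + θb t) :
    ∀ k, 1 ≤ k →
      ∑ t ∈ Icc 1 k, η / 2 * ‖gradient f (x t)‖ ^ 2 ≤
        (f (x 1) - fstar) - (f (x (k + 1)) - fstar)
          + ∑ t ∈ Icc 1 k, L * η ^ 2 * ‖θu t‖ ^ 2
          + ∑ t ∈ Icc 1 k, (L * η ^ 2 - η) * ⟪gradient f (x t), θu t⟫
          + ∑ t ∈ Icc 1 k, 3 * η / 2 * ‖θb t‖ ^ 2 := by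
  intro k _
  have hLη : L * η ≤ 1 := by rwa [le_div_iff₀' hL] at hη
  have hstep : ∀ t ∈ Icc 1 k, η / 2 * ‖gradient f (x t)‖ ^ 2 ≤
      f (x t) - f (x (t + 1)) + L * η ^ 2 * ‖θu t‖ ^ 2
        + (L * η ^ 2 - η) * ⟪gradient f (x t), θu t⟫ + 3 * η / 2 * ‖θb t‖ ^ 2 := by
    intro t ht
    have hgt : gt t = gradient f (x t) + (θu t + θb t) := by
      rw [← hdecomp, hθ, add_sub_cancel]
    rw [hupdate t (mem_Icc.1 ht).1, hgt]
    exact inexact_gradient_step hdiff hsmooth hL.le hη0.le hLη (x t) (θu t) (θb t)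
  have htel : ∑ t ∈ Icc 1 k, (f (x t) - f (x (t + 1))) = f (x 1) - f (x (k + 1)) := by
    rw [← Ico_add_one_right_eq_Icc, ← neg_inj, ← sum_neg_distrib]
    simpa using sum_Ico_sub (fun t => f (x t)) (Nat.le_add_left 1 k)
  have hsum := sum_le_sum hstep
  simp only [sum_add_distrib, htel] at hsum
  linarith
end

section
/- Let L > 0, Δ₁ > 0, T ≥ 2, δ ∈ (0,1), p ∈ (1,2], σ > 0, and suppose λ > 0 and η > 0 satisfy (1/L)·(σ/λ)^p ≤ η, η ≤ 1/L, (σ/λ)^p·T^{p/(3p−2)} ≤ 1/32, and T·L·(σ/λ)^p·λ²·η² ≤ Δ₁/2048, together with η·λ = √Δ₁·T^{(1−p)/(3p−2)}/(8√L·ln(4T/δ)). Set F = 64·L·Δ₁·σ^p·λ^{2−p}·η²·T and a = ( (4/3)·√(L·Δ₁)·η·λ + √( 16·L·Δ₁·η²·λ²/9 + 2F ) )·ln(4T/δ). Then a ≤ 7·Δ₁/12. -/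
/-- Arithmetic bound on the Freedman deviation threshold `a` used in the non-convex
analysis of clipped-SGD. -/
theorem freedman_threshold_bound
    (L Δ1 δ p σ : ℝ) (T : ℕ)
    (hL : 0 < L) (hΔ1 : 0 < Δ1) (hT : 2 ≤ T) (hδ0 : 0 < δ) (hδ1 : δ < 1)
    (hp1 : 1 < p) (hp2 : p ≤ 2) (hσ : 0 < σ)
    (lam η : ℝ) (hlam : 0 < lam) (hη : 0 < η)
    (h1 : (1 / L) * (σ / lam) ^ p ≤ η)
    (h2 : η ≤ 1 / L)
    (h3 : (σ / lam) ^ p * (T : ℝ) ^ (p / (3 * p - 2)) ≤ 1 / 32)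
    (h4 : (T : ℝ) * L * (σ / lam) ^ p * lam ^ 2 * η ^ 2 ≤ Δ1 / 2048)
    (h5 : η * lam = Real.sqrt Δ1 * (T : ℝ) ^ ((1 - p) / (3 * p - 2))
            / (8 * Real.sqrt L * Real.log (4 * T / δ)))
    (F a : ℝ)
    (hF : F = 64 * L * Δ1 * σ ^ p * lam ^ (2 - p) * η ^ 2 * T)
    (ha : a = (4 / 3 * Real.sqrt (L * Δ1) * η * lam
          + Real.sqrt (16 * L * Δ1 * η ^ 2 * lam ^ 2 / 9 + 2 * F))
          * Real.log (4 * T / δ)) :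
    a ≤ 7 * Δ1 / 12 := by
  have hT1 : (1 : ℝ) ≤ T := by exact_mod_cast (by omega : 1 ≤ T)
  have hT0 : (0 : ℝ) < T := by linarith
  have hlog : 0 < Real.log (4 * T / δ) := by
    apply Real.log_pos
    rw [lt_div_iff₀ hδ0]
    linarith
  have hp : 0 < 3 * p - 2 := by linarith
  have hX0 : 0 < (T : ℝ) ^ ((1 - p) / (3 * p - 2)) := Real.rpow_pos_of_pos hT0 _
  have hX1 : (T : ℝ) ^ ((1 - p) / (3 * p - 2)) ≤ 1 :=
    Real.rpow_le_one_of_one_le_of_nonpos hT1 (div_nonpos_of_nonpos_of_nonneg (by linarith) hp.le)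
  have hXT : (T : ℝ) ^ (p / (3 * p - 2)) = ((T : ℝ) ^ ((1 - p) / (3 * p - 2))) ^ 2 * T := by
    rw [← Real.rpow_natCast, ← Real.rpow_mul hT0.le, ← Real.rpow_add_one hT0.ne']
    rw [div_mul_eq_mul_div, div_add_one hp.ne']
    congr 2
    push_cast
    ring
  have hE : σ ^ p * lam ^ (2 - p) = (σ / lam) ^ p * lam ^ 2 := by
    rw [Real.div_rpow hσ.le hlam.le, Real.rpow_sub hlam, Real.rpow_two]
    ring
  have hs : 0 < Real.sqrt L := Real.sqrt_pos.2 hL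
  have hs2 : Real.sqrt L ^ 2 = L := Real.sq_sqrt hL.le
  have hd2 : Real.sqrt Δ1 ^ 2 = Δ1 := Real.sq_sqrt hΔ1.le
  rw [hXT] at h3
  rw [Real.sqrt_mul hL.le] at ha
  replace hF : F = 64 * L * Δ1 * ((σ / lam) ^ p * lam ^ 2) * η ^ 2 * T := by
    rw [hF, ← hE]
    ring
  generalize (T : ℝ) ^ ((1 - p) / (3 * p - 2)) = X at *
  generalize Real.log (4 * T / δ) = l at *
  generalize (σ / lam) ^ p = E at *
  have hq : Real.sqrt L * (η * lam) * l = Real.sqrt Δ1 * X / 8 := by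
    rw [h5]
    field_simp
  have hq2 : L * (η * lam) ^ 2 * l ^ 2 = Δ1 * X ^ 2 / 64 := by
    calc L * (η * lam) ^ 2 * l ^ 2 = (Real.sqrt L * (η * lam) * l) ^ 2 := by
          linear_combination -((η * lam) ^ 2 * l ^ 2) * hs2
      _ = Δ1 * X ^ 2 / 64 := by
          rw [hq, div_pow, mul_pow, hd2]
          norm_num
  have hlin : 4 / 3 * (Real.sqrt L * Real.sqrt Δ1) * η * lam * l = Δ1 * X / 6 := by
    linear_combination 4 / 3 * Real.sqrt Δ1 * hq + X / 6 * hd2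
  have hquad : (16 * L * Δ1 * η ^ 2 * lam ^ 2 / 9 + 2 * F) * l ^ 2
      = Δ1 ^ 2 * (X ^ 2 / 36 + 2 * (E * (X ^ 2 * T))) := by
    rw [hF]
    linear_combination (16 * Δ1 / 9 + 128 * Δ1 * E * T) * hq2
  have hX2 : X ^ 2 ≤ 1 := pow_le_one₀ hX0.le hX1
  have hroot : Real.sqrt (16 * L * Δ1 * η ^ 2 * lam ^ 2 / 9 + 2 * F) ≤ 5 * Δ1 / 12 / l := by
    refine Real.sqrt_le_iff.2 ⟨by positivity, ?_⟩
    rw [div_pow, le_div_iff₀ (by positivity), hquad]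
    calc Δ1 ^ 2 * (X ^ 2 / 36 + 2 * (E * (X ^ 2 * T))) ≤ Δ1 ^ 2 * (25 / 144) := by
          gcongr
          linarith
      _ = (5 * Δ1 / 12) ^ 2 := by ring
  rw [le_div_iff₀ hlog] at hroot
  have hXΔ : Δ1 * X ≤ Δ1 := mul_le_of_le_one_right hΔ1.le hX1
  rw [ha, add_mul, hlin]
  linarith
end
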